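/- arXiv:2106.01070 — 2 statements merged into one kernel-verified Lean document; each statement's English description precedes it below -/
import Mathlib

section
/- Near-optimal projection measure: suppose d(x_i) < +∞ for every i = 1,…,N. Fix ε > 0, and for each i let x_i^ε ∈ 𝒳 satisfy 𝒞(x_i^ε) = 1 − 𝒞(x_i) and c̄(x_i, x_i^ε) ≤ d(x_i) + ε. Let (p_i^⋆)_{i=1}^N be an optimal solution of the linear program min { (1/N) Σ_i p_i d(x_i) : p ∈ [0,1]^N, Σ_i (1−2𝒞(x_i)) φ(u_i, E_{P̂_N}[U]) p_i = − Σ_i 𝒞(x_i) φ(u_i, E_{P̂_N}[U]) }. Then the probability measure Q^ε = (1/N) Σ_{i=1}^N [ (1 − p_i^⋆) δ_{(x_i,a_i,y_i)} + p_i^⋆ δ_{(x_i^ε, a_i, y_i)} ] belongs to the fair set ℱ and satisfies W_c(Q^ε, P̂_N) ≤ inf_{Q ∈ ℱ} W_c(Q, P̂_N) + ε. -/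
open BigOperators ENNReal MeasureTheory
open scoped Classical

noncomputable section

/-- Optimal transport cost between two measures, for a cost `c`:
`W_c(Q₁,Q₂) = inf { E_π[c(Z,Z')] : π a coupling of (Q₁,Q₂) }`. -/
def Wcost {Z : Type*} [MeasurableSpace Z] (c : Z → Z → ℝ≥0∞) (μ ν : Measure Z) : ℝ≥0∞ :=
  ⨅ π ∈ {π : Measure (Z × Z) |
      π.map Prod.fst = μ ∧ π.map Prod.snd = ν}, ∫⁻ p, c p.1 p.2 ∂π

/-- The transport cost on `𝒵 = 𝒳 × 𝒜 × 𝒴` built from a ground cost `c̄` on features: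
`c((x,a,y),(x',a',y')) = c̄(x,x') + ∞·|a−a'| + ∞·|y−y'|` (with `∞·0 = 0`). -/
def prodCost {X A : Type*} (cbar : X → X → ℝ≥0∞) :
    (X × A × Bool) → (X × A × Bool) → ℝ≥0∞ :=
  fun z z' => cbar z.1 z'.1 + (if z.2.1 = z'.2.1 then (0 : ℝ≥0∞) else ⊤) +
    (if z.2.2 = z'.2.2 then (0 : ℝ≥0∞) else ⊤)

/-- Distance to the set of features with the opposite classifier label:
`d(x) = inf { c̄(x,x') : 𝒞(x') = 1 − 𝒞(x) }`. -/
def dBoundary {X : Type*} (cbar : X → X → ℝ≥0∞) (C : X → ℝ) (x : X) : ℝ≥0∞ :=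
  ⨅ x' ∈ {x' | C x' = 1 - C x}, cbar x x'

/-- The set of distributions on `𝒵` under which the classifier `𝒞` is fair with
respect to the discerning tuple `(U, φ)`: `ℱ = { Q : E_Q[𝒞(X) φ(U, E_Q[U])] = 0 }`. -/
def fairSet {d s m : ℕ} (𝒳 : Set (Fin d → ℝ)) (𝒜 : Type*) [MeasurableSpace 𝒜]
    (C : ↥𝒳 → ℝ) (ψ : 𝒜 × Bool → Fin s → ℝ)
    (φ : (Fin s → ℝ) → (Fin s → ℝ) → Fin m → ℝ) :
    Set (Measure (↥𝒳 × 𝒜 × Bool)) :=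
  {Q | IsProbabilityMeasure Q ∧
    (∫ z, C z.1 • φ (ψ z.2) (∫ z', ψ z'.2 ∂Q) ∂Q) = 0}

/-- The empirical measure `P̂_N = N⁻¹ Σᵢ δ_{(xᵢ,aᵢ,yᵢ)}`. -/
def empMeasure {d : ℕ} {𝒳 : Set (Fin d → ℝ)} {𝒜 : Type*} [MeasurableSpace 𝒜]
    {N : ℕ} (x : Fin N → ↥𝒳) (a : Fin N → 𝒜) (y : Fin N → Bool) :
    Measure (↥𝒳 × 𝒜 × Bool) :=
  (N : ℝ≥0∞)⁻¹ • ∑ i, Measure.dirac (x i, a i, y i)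

/-!
Fix a fair `Q` and a coupling `π` of `Q` with the empirical measure of finite cost. Finiteness
forces the labels `(a, y)` of the two coordinates to agree almost surely, so `E_Q[U]` is the
empirical mean of `U` and the fairness constraint becomes linear in `Q`. Let `qᵢ` be the conditional
probability, given that the second coordinate is the `i`-th sample, that the first one has the
opposite classification. Since `𝒞(X) = 𝒞(X') + (1 - 2 𝒞(X')) 1_{𝒞(X) ≠ 𝒞(X')}`, fairness of `Q` says
that `q` is feasible for the linear program, and a flip at `xᵢ` costs at least `d(xᵢ)`, so `π` costs
at least the objective at `q`. Conversely, moving a fraction `pᵢ` of the `i`-th atom to `xᵢ^ε` is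
fair as soon as `p` is feasible, and costs at most the objective at `p` plus `ε`.
-/

section Measure

variable {Z : Type*} [MeasurableSpace Z]

theorem measure_eq_zero_of_lintegral_ne_top_of_eqOn_top {μ : Measure Z} {f : Z → ℝ≥0∞} {s : Set Z}
    (hs : MeasurableSet s) (hf : ∀ w ∈ s, f w = ⊤) (hint : ∫⁻ w, f w ∂μ ≠ ⊤) : μ s = 0 := by
  by_contra hμs
  refine hint (top_le_iff.mp ?_)
  calc ⊤ = ∫⁻ _ in s, ⊤ ∂μ := by rw [setLIntegral_const, ENNReal.top_mul hμs]
    _ ≤ ∫⁻ w in s, f w ∂μ := setLIntegral_mono' hs fun w hw => (hf w hw).ge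
    _ ≤ ∫⁻ w, f w ∂μ := setLIntegral_le_lintegral _ _

theorem exists_measurable_le_one_withDensity_eq_of_le {μ ν : Measure Z} [SigmaFinite ν]
    (h : μ ≤ ν) : ∃ g : Z → ℝ≥0∞, Measurable g ∧ (∀ w, g w ≤ 1) ∧ ν.withDensity g = μ := by
  have : SigmaFinite μ := Measure.sigmaFinite_of_le ν h
  refine ⟨fun w => min (μ.rnDeriv ν w) 1, by fun_prop, fun w => min_le_right _ _, ?_⟩
  have hmin : (fun w => min (μ.rnDeriv ν w) 1) =ᵐ[ν] μ.rnDeriv ν :=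
    (Measure.rnDeriv_le_one_of_le h).mono fun w hw => min_eq_left hw
  rw [withDensity_congr_ae hmin,
    Measure.withDensity_rnDeriv_eq μ ν (Measure.absolutelyContinuous_of_le h)]

end Measure

section Empirical

variable {Z W E : Type*} [MeasurableSpace Z] [MeasurableSpace W]
  [NormedAddCommGroup E] {N : ℕ}

/-- The empirical measure `N⁻¹ Σᵢ δ_{zᵢ}` of a sample in an arbitrary measurable space. -/
def empirical (z : Fin N → Z) : Measure Z :=
  (N : ℝ≥0∞)⁻¹ • ∑ i, Measure.dirac (z i)

/-- The empirical measure with its `i`-th atom rescaled by `qᵢ`, that is `N⁻¹ Σᵢ qᵢ δ_{zᵢ}`. The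
weights are real, as in the linear program; negative ones count as `0`. -/
def weightedEmpirical (q : Fin N → ℝ) (z : Fin N → Z) : Measure Z :=
  (N : ℝ≥0∞)⁻¹ • ∑ i, ENNReal.ofReal (q i) • Measure.dirac (z i)

/-- The measure `N⁻¹ Σᵢ [(1 - pᵢ) δ_{zᵢ} + pᵢ δ_{zᵢ'}]` obtained from the empirical measure of `z`
by moving the fraction `pᵢ` of the `i`-th atom to `zᵢ'`. This is `Q^ε` for
`zᵢ' = (xᵢ^ε, aᵢ, yᵢ)`. -/
def movedEmpirical (p : Fin N → ℝ) (z z' : Fin N → Z) : Measure Z :=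
  (N : ℝ≥0∞)⁻¹ • ∑ i, (ENNReal.ofReal (1 - p i) • Measure.dirac (z i) +
    ENNReal.ofReal (p i) • Measure.dirac (z' i))

theorem empirical_eq_weightedEmpirical (z : Fin N → Z) :
    empirical z = weightedEmpirical 1 z := by
  simp only [empirical, weightedEmpirical, Pi.one_apply, ENNReal.ofReal_one, one_smul]

theorem movedEmpirical_eq_add (p : Fin N → ℝ) (z z' : Fin N → Z) :
    movedEmpirical p z z' = weightedEmpirical (1 - p) z + weightedEmpirical p z' := by
  simp only [movedEmpirical, weightedEmpirical, Finset.sum_add_distrib, smul_add, Pi.sub_apply,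
    Pi.one_apply]

theorem weightedEmpirical_one_sub_add {p : Fin N → ℝ} (hp : ∀ i, p i ∈ Set.Icc (0 : ℝ) 1)
    (z : Fin N → Z) : weightedEmpirical (1 - p) z + weightedEmpirical p z = empirical z := by
  have hsum (i : Fin N) : ENNReal.ofReal (1 - p i) + ENNReal.ofReal (p i) = 1 := by
    rw [← ENNReal.ofReal_add (sub_nonneg.2 (hp i).2) (hp i).1, sub_add_cancel, ENNReal.ofReal_one]
  rw [← movedEmpirical_eq_add]
  simp only [movedEmpirical, empirical, ← add_smul, hsum, one_smul]

theorem lintegral_weightedEmpirical_of_measurable (q : Fin N → ℝ) (z : Fin N → Z) {f : Z → ℝ≥0∞}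
    (hf : Measurable f) :
    ∫⁻ w, f w ∂weightedEmpirical q z = (N : ℝ≥0∞)⁻¹ * ∑ i, ENNReal.ofReal (q i) * f (z i) := by
  simp only [weightedEmpirical, lintegral_smul_measure, lintegral_finsetSum_measure,
    lintegral_dirac' _ hf, smul_eq_mul]

theorem map_weightedEmpirical (q : Fin N → ℝ) (z : Fin N → Z) {g : Z → W} (hg : Measurable g) :
    (weightedEmpirical q z).map g = weightedEmpirical q (fun i => g (z i)) :=
  Measure.ext_of_lintegral _ fun f hf => by
    rw [lintegral_map hf hg, lintegral_weightedEmpirical_of_measurable _ _ hf]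
    exact lintegral_weightedEmpirical_of_measurable _ _ (hf.comp hg)

theorem map_empirical (z : Fin N → Z) {g : Z → W} (hg : Measurable g) :
    (empirical z).map g = empirical (fun i => g (z i)) := by
  simp only [empirical_eq_weightedEmpirical, map_weightedEmpirical _ _ hg]

instance isProbabilityMeasure_empirical [NeZero N] (z : Fin N → Z) :
    IsProbabilityMeasure (empirical z) := by
  constructor
  simp only [empirical, Measure.smul_apply, Measure.finsetSum_apply, measure_univ, Finset.sum_const,
    Finset.card_univ, Fintype.card_fin, nsmul_eq_mul, mul_one, smul_eq_mul]
  exact ENNReal.inv_mul_cancel (NeZero.ne _) (ENNReal.natCast_ne_top N)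

theorem isProbabilityMeasure_movedEmpirical [NeZero N] {p : Fin N → ℝ}
    (hp : ∀ i, p i ∈ Set.Icc (0 : ℝ) 1) (z z' : Fin N → Z) :
    IsProbabilityMeasure (movedEmpirical p z z') := by
  have huniv (q : Fin N → ℝ) (v v' : Fin N → Z) :
      weightedEmpirical q v Set.univ = weightedEmpirical q v' Set.univ := by
    simp only [weightedEmpirical, Measure.smul_apply, Measure.finsetSum_apply, measure_univ]
  constructor
  rw [movedEmpirical_eq_add, Measure.add_apply, huniv p z' z, ← Measure.add_apply,
    weightedEmpirical_one_sub_add hp, measure_univ]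

theorem exists_eq_weightedEmpirical_of_le [NeZero N] {ν : Measure Z} {z : Fin N → Z}
    (h : ν ≤ empirical z) :
    ∃ q : Fin N → ℝ, (∀ i, q i ∈ Set.Icc (0 : ℝ) 1) ∧ ν = weightedEmpirical q z := by
  obtain ⟨g, hg, hg_le, rfl⟩ := exists_measurable_le_one_withDensity_eq_of_le h
  refine ⟨fun i => (g (z i)).toReal, fun i => ⟨ENNReal.toReal_nonneg,
    ENNReal.toReal_le_of_le_ofReal zero_le_one (by simpa using hg_le (z i))⟩, ?_⟩
  refine Measure.ext_of_lintegral _ fun f hf => ?_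
  rw [lintegral_withDensity_eq_lintegral_mul _ hg hf, empirical_eq_weightedEmpirical,
    lintegral_weightedEmpirical_of_measurable _ _ (hg.mul hf),
    lintegral_weightedEmpirical_of_measurable _ _ hf]
  simp only [Pi.one_apply, ENNReal.ofReal_one, one_mul, Pi.mul_apply,
    ENNReal.ofReal_toReal ((hg_le _).trans_lt one_lt_top).ne]

variable [MeasurableSingletonClass Z]

theorem lintegral_weightedEmpirical (q : Fin N → ℝ) (z : Fin N → Z) (f : Z → ℝ≥0∞) :
    ∫⁻ w, f w ∂weightedEmpirical q z = (N : ℝ≥0∞)⁻¹ * ∑ i, ENNReal.ofReal (q i) * f (z i) := by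
  simp only [weightedEmpirical, lintegral_smul_measure, lintegral_finsetSum_measure,
    lintegral_dirac, smul_eq_mul]

theorem ae_empirical (z : Fin N → Z) : ∀ᵐ w ∂empirical z, w ∈ Set.range z :=
  Measure.ae_smul_measure (ae_finsetSum_measure_iff.2 fun i _ => by simp [ae_dirac_eq]) _

theorem integrable_weightedEmpirical [NeZero N] (q : Fin N → ℝ) (z : Fin N → Z) (f : Z → E) :
    Integrable f (weightedEmpirical q z) :=
  (integrable_finsetSum_measure.2 fun _ _ =>
    (integrable_dirac enorm_lt_top).smul_measure ENNReal.ofReal_ne_top).smul_measure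
      (ENNReal.inv_ne_top.2 (NeZero.ne _))

theorem integrable_empirical [NeZero N] (z : Fin N → Z) (f : Z → E) :
    Integrable f (empirical z) :=
  empirical_eq_weightedEmpirical z ▸ integrable_weightedEmpirical 1 z f

variable [NormedSpace ℝ E] [CompleteSpace E]

theorem integral_weightedEmpirical {q : Fin N → ℝ} (hq : ∀ i, 0 ≤ q i) (z : Fin N → Z)
    (f : Z → E) : ∫ w, f w ∂weightedEmpirical q z = (N : ℝ)⁻¹ • ∑ i, q i • f (z i) := by
  rw [weightedEmpirical, integral_smul_measure, integral_finsetSum_measure fun i _ =>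
    (integrable_dirac enorm_lt_top).smul_measure ENNReal.ofReal_ne_top]
  simp only [integral_smul_measure, integral_dirac, ENNReal.toReal_ofReal (hq _),
    ENNReal.toReal_inv, ENNReal.toReal_natCast]

theorem integral_empirical (z : Fin N → Z) (f : Z → E) :
    ∫ w, f w ∂empirical z = (N : ℝ)⁻¹ • ∑ i, f (z i) := by
  rw [empirical_eq_weightedEmpirical, integral_weightedEmpirical (q := 1) fun _ => zero_le_one]
  simp only [Pi.one_apply, one_smul]

theorem integral_movedEmpirical [NeZero N] {p : Fin N → ℝ} (hp : ∀ i, p i ∈ Set.Icc (0 : ℝ) 1)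
    (z z' : Fin N → Z) (f : Z → E) :
    ∫ w, f w ∂movedEmpirical p z z' =
      (N : ℝ)⁻¹ • ∑ i, ((1 - p i) • f (z i) + p i • f (z' i)) := by
  rw [movedEmpirical_eq_add, integral_add_measure (integrable_weightedEmpirical _ _ _)
    (integrable_weightedEmpirical _ _ _),
    integral_weightedEmpirical (q := 1 - p) fun i => sub_nonneg.2 (hp i).2,
    integral_weightedEmpirical fun i => (hp i).1, ← smul_add, ← Finset.sum_add_distrib]
  rfl

end Empirical

section TransportUpperBound

theorem inv_mul_sum_ofReal_mul_add_le {N : ℕ} [NeZero N] {p : Fin N → ℝ} (hp : ∀ i, p i ≤ 1)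
    (D : Fin N → ℝ≥0∞) (e : ℝ≥0∞) :
    (N : ℝ≥0∞)⁻¹ * ∑ i, ENNReal.ofReal (p i) * (D i + e) ≤
      (N : ℝ≥0∞)⁻¹ * ∑ i, ENNReal.ofReal (p i) * D i + e := by
  calc (N : ℝ≥0∞)⁻¹ * ∑ i, ENNReal.ofReal (p i) * (D i + e)
      ≤ (N : ℝ≥0∞)⁻¹ * ∑ i, (ENNReal.ofReal (p i) * D i + e) := by
        gcongr with i
        rw [mul_add]
        gcongr
        exact mul_le_of_le_one_left zero_le (ENNReal.ofReal_le_one.2 (hp i))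
    _ = (N : ℝ≥0∞)⁻¹ * ∑ i, ENNReal.ofReal (p i) * D i + (N : ℝ≥0∞)⁻¹ * (N * e) := by
        simp only [Finset.sum_add_distrib, mul_add, Finset.sum_const, Finset.card_univ,
          Fintype.card_fin, nsmul_eq_mul]
    _ = (N : ℝ≥0∞)⁻¹ * ∑ i, ENNReal.ofReal (p i) * D i + e := by
        rw [ENNReal.inv_mul_cancel_left (NeZero.ne _) (ENNReal.natCast_ne_top N)]

variable {Z : Type*} [MeasurableSpace Z] [MeasurableSingletonClass Z] {N : ℕ}

theorem Wcost_movedEmpirical_le {c : Z → Z → ℝ≥0∞} (hc_self : ∀ w, c w w = 0) {p : Fin N → ℝ}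
    (hp : ∀ i, p i ∈ Set.Icc (0 : ℝ) 1) (z z' : Fin N → Z) :
    Wcost c (movedEmpirical p z z') (empirical z) ≤
      (N : ℝ≥0∞)⁻¹ * ∑ i, ENNReal.ofReal (p i) * c (z' i) (z i) := by
  set π := weightedEmpirical (1 - p) (fun i => (z i, z i)) +
    weightedEmpirical p (fun i => (z' i, z i)) with hπ
  have hfst : π.map Prod.fst = movedEmpirical p z z' := by
    rw [hπ, Measure.map_add _ _ measurable_fst, map_weightedEmpirical _ _ measurable_fst,
      map_weightedEmpirical _ _ measurable_fst, movedEmpirical_eq_add]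
  have hsnd : π.map Prod.snd = empirical z := by
    rw [hπ, Measure.map_add _ _ measurable_snd, map_weightedEmpirical _ _ measurable_snd,
      map_weightedEmpirical _ _ measurable_snd, weightedEmpirical_one_sub_add hp]
  calc Wcost c (movedEmpirical p z z') (empirical z)
      ≤ ∫⁻ w, c w.1 w.2 ∂π := iInf₂_le π ⟨hfst, hsnd⟩
    _ = (N : ℝ≥0∞)⁻¹ * ∑ i, ENNReal.ofReal (p i) * c (z' i) (z i) := by
      rw [hπ, lintegral_add_measure, lintegral_weightedEmpirical, lintegral_weightedEmpirical]
      simp only [hc_self, mul_zero, Finset.sum_const_zero, zero_add]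

end TransportUpperBound

section Cost

variable {X 𝒜 : Type*} {cbar : X → X → ℝ≥0∞} {C : X → ℝ}

theorem eq_one_sub_of_ne (hC_bin : ∀ x, C x = 0 ∨ C x = 1) {x x' : X} (h : C x ≠ C x') :
    C x = 1 - C x' := by
  rcases hC_bin x with hx | hx <;> rcases hC_bin x' with hx' | hx' <;> simp_all

theorem prodCost_of_label_eq {w w' : X × 𝒜 × Bool} (h : w.2 = w'.2) :
    prodCost cbar w w' = cbar w.1 w'.1 := by
  simp only [prodCost, h, if_true, add_zero]

theorem prodCost_of_label_ne {w w' : X × 𝒜 × Bool} (h : w.2 ≠ w'.2) :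
    prodCost cbar w w' = ⊤ := by
  by_cases ha : w.2.1 = w'.2.1
  · have hy : w.2.2 ≠ w'.2.2 := fun hy => h (Prod.ext ha hy)
    simp only [prodCost, hy, if_false, add_top]
  · simp only [prodCost, ha, if_false, add_top, top_add]

theorem dBoundary_le_prodCost (hc_symm : ∀ x x', cbar x x' = cbar x' x)
    (hC_bin : ∀ x, C x = 0 ∨ C x = 1) {w w' : X × 𝒜 × Bool} (h : C w.1 ≠ C w'.1) :
    dBoundary cbar C w'.1 ≤ prodCost cbar w w' :=
  calc dBoundary cbar C w'.1 ≤ cbar w'.1 w.1 := iInf₂_le w.1 (eq_one_sub_of_ne hC_bin h)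
    _ = cbar w.1 w'.1 := hc_symm _ _
    _ ≤ prodCost cbar w w' := le_add_right le_self_add

end Cost

section Coupling

variable {X B : Type*} {C : X → ℝ}

/-- The event that the two coordinates of a coupling are classified differently. -/
def flipEvent (B : Type*) (C : X → ℝ) : Set ((X × B) × X × B) :=
  {w | C w.1.1 ≠ C w.2.1}

theorem smul_label_eq_add_indicator_flipEvent {E : Type*} [AddCommGroup E] [Module ℝ E] {F : B → E}
    (hC_bin : ∀ x, C x = 0 ∨ C x = 1) {w : (X × B) × X × B} (hw : w.1.2 = w.2.2) :
    C w.1.1 • F w.1.2 = C w.2.1 • F w.2.2 +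
      (flipEvent B C).indicator (fun v => (1 - 2 * C v.2.1) • F v.2.2) w := by
  by_cases hC : C w.1.1 = C w.2.1
  · rw [Set.indicator_of_notMem (not_not.2 hC), add_zero, hw, hC]
  · rw [Set.indicator_of_mem hC, hw, eq_one_sub_of_ne hC_bin hC]
    module

variable [MeasurableSpace X] [MeasurableSpace B] {π : Measure ((X × B) × X × B)}

theorem measurableSet_flipEvent (hC_meas : Measurable C) : MeasurableSet (flipEvent B C) :=
  (measurableSet_eq_fun (hC_meas.comp measurable_fst.fst)
    (hC_meas.comp measurable_snd.fst)).compl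

/- Only singletons of `B` are measurable, so the diagonal of `B × B` need not be: the exceptional
event is covered by the measurable ones on which the second label is that of the `i`-th sample. -/
theorem ae_label_eq_of_lintegral_ne_top [MeasurableSingletonClass X] [MeasurableSingletonClass B]
    {N : ℕ} {z : Fin N → X × B} (hsnd : π.map Prod.snd = empirical z)
    {c : X × B → X × B → ℝ≥0∞} (hc_label : ∀ w w', w.2 ≠ w'.2 → c w w' = ⊤)
    (hcost : ∫⁻ w, c w.1 w.2 ∂π ≠ ⊤) : ∀ᵐ w ∂π, w.1.2 = w.2.2 := by
  have hrange : ∀ᵐ w ∂π, w.2 ∈ Set.range z :=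
    ae_of_ae_map measurable_snd.aemeasurable (hsnd ▸ ae_empirical z)
  have hlabel (i : Fin N) : ∀ᵐ w ∂π, ¬(w.2.2 = (z i).2 ∧ w.1.2 ≠ (z i).2) := by
    have hmeas : MeasurableSet
        {w : (X × B) × X × B | w.2.2 = (z i).2 ∧ w.1.2 ≠ (z i).2} :=
      (measurable_snd.snd (measurableSet_singleton _)).inter
        (measurable_fst.snd (measurableSet_singleton _)).compl
    exact measure_eq_zero_iff_ae_notMem.1 <| measure_eq_zero_of_lintegral_ne_top_of_eqOn_top hmeas
      (fun w hw => hc_label _ _ (hw.1 ▸ hw.2)) hcost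
  filter_upwards [hrange, ae_all_iff.2 hlabel] with w ⟨i, hi⟩ hw
  by_contra hne
  exact hw i (by rw [hi]; exact ⟨rfl, hne⟩)

theorem map_snd_map_fst_eq_of_ae_label_eq (hlabel : ∀ᵐ w ∂π, w.1.2 = w.2.2) :
    (π.map Prod.fst).map Prod.snd = (π.map Prod.snd).map Prod.snd := by
  rw [Measure.map_map measurable_snd measurable_fst, Measure.map_map measurable_snd measurable_snd]
  exact Measure.map_congr hlabel

theorem lintegral_map_restrict_flipEvent_le (hC_meas : Measurable C)
    {c : X × B → X × B → ℝ≥0∞} {D : X × B → ℝ≥0∞}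
    (hD : ∀ w w', C w.1 ≠ C w'.1 → D w' ≤ c w w') :
    ∫⁻ w, D w ∂(π.restrict (flipEvent B C)).map Prod.snd ≤ ∫⁻ w, c w.1 w.2 ∂π :=
  calc ∫⁻ w, D w ∂(π.restrict (flipEvent B C)).map Prod.snd
      ≤ ∫⁻ w in flipEvent B C, D w.2 ∂π := lintegral_map_le _ _
    _ ≤ ∫⁻ w in flipEvent B C, c w.1 w.2 ∂π :=
        setLIntegral_mono' (measurableSet_flipEvent hC_meas) fun _ hw => hD _ _ hw
    _ ≤ ∫⁻ w, c w.1 w.2 ∂π := setLIntegral_le_lintegral _ _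

variable {E : Type*} [NormedAddCommGroup E] [NormedSpace ℝ E] {F : B → E}

theorem integrable_smul_label {μ : Measure (X × B)} {k : X → ℝ} {K : ℝ} (hk : Measurable k)
    (hkK : ∀ x, ‖k x‖ ≤ K) (hF : Integrable F (μ.map Prod.snd)) :
    Integrable (fun w => k w.1 • F w.2) μ :=
  (hF.comp_measurable measurable_snd).bdd_smul K (hk.comp measurable_fst).aestronglyMeasurable
    (.of_forall fun w => hkK w.1)

theorem integral_map_fst_eq_add_integral_flipEvent (hC_meas : Measurable C)
    (hC_bin : ∀ x, C x = 0 ∨ C x = 1) (hlabel : ∀ᵐ w ∂π, w.1.2 = w.2.2)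
    (hF : Integrable F ((π.map Prod.snd).map Prod.snd)) :
    ∫ w, C w.1 • F w.2 ∂π.map Prod.fst =
      ∫ w, C w.1 • F w.2 ∂π.map Prod.snd +
        ∫ w, (1 - 2 * C w.1) • F w.2 ∂(π.restrict (flipEvent B C)).map Prod.snd := by
  have hC_le (x : X) : ‖C x‖ ≤ 1 := by rcases hC_bin x with h | h <;> simp [h]
  have hflip_le (x : X) : ‖1 - 2 * C x‖ ≤ 1 := by rcases hC_bin x with h | h <;> norm_num [h]
  have hfst : Integrable (fun w => C w.1 • F w.2) (π.map Prod.fst) :=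
    integrable_smul_label hC_meas hC_le (map_snd_map_fst_eq_of_ae_label_eq hlabel ▸ hF)
  have hsnd : Integrable (fun w => C w.1 • F w.2) (π.map Prod.snd) :=
    integrable_smul_label hC_meas hC_le hF
  have hflip : Integrable (fun w => (1 - 2 * C w.1) • F w.2) (π.map Prod.snd) :=
    integrable_smul_label (k := fun x => 1 - 2 * C x) (by fun_prop) hflip_le hF
  have hrestrict : (π.restrict (flipEvent B C)).map Prod.snd ≤ π.map Prod.snd :=
    Measure.map_mono Measure.restrict_le_self measurable_snd
  have hS : MeasurableSet (flipEvent B C) := measurableSet_flipEvent hC_meas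
  rw [integral_map measurable_fst.aemeasurable hfst.aestronglyMeasurable,
    integral_map measurable_snd.aemeasurable hsnd.aestronglyMeasurable,
    integral_map measurable_snd.aemeasurable (hflip.mono_measure hrestrict).aestronglyMeasurable,
    ← integral_indicator hS]
  refine (integral_congr_ae <| hlabel.mono fun _ =>
    smul_label_eq_add_indicator_flipEvent hC_bin).trans ?_
  exact integral_add (hsnd.comp_measurable measurable_snd)
    ((hflip.comp_measurable measurable_snd).indicator hS)

end Coupling

section Fairness

variable {X B V E : Type*} [MeasurableSpace X] [MeasurableSpace B]
  [NormedAddCommGroup V] [NormedSpace ℝ V] [NormedAddCommGroup E] [NormedSpace ℝ E]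
  {C : X → ℝ} {ψ : B → V} {φ : V → V → E} {N : ℕ} {z : Fin N → X × B}

/-- The fair set `ℱ` over an arbitrary feature space `X` and label space `B`, with `U` the image of
the label under `ψ`. -/
def fairMeasures (C : X → ℝ) (ψ : B → V) (φ : V → V → E) : Set (Measure (X × B)) :=
  {Q | IsProbabilityMeasure Q ∧ ∫ w, C w.1 • φ (ψ w.2) (∫ w', ψ w'.2 ∂Q) ∂Q = 0}

/-- The weight `φ(u, E_{P̂_N}[U])`, as a function of the label, in the constraints of the linear
program. -/
def fairnessWeight (ψ : B → V) (φ : V → V → E) (z : Fin N → X × B) (b : B) : E :=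
  φ (ψ b) ((N : ℝ)⁻¹ • ∑ j, ψ (z j).2)

/-- The feasible set of the projection linear program: the vectors of flip probabilities `pᵢ` that
make the empirical measure fair. -/
def fairFlips (C : X → ℝ) (ψ : B → V) (φ : V → V → E) (z : Fin N → X × B) : Set (Fin N → ℝ) :=
  {p | (∀ i, p i ∈ Set.Icc (0 : ℝ) 1) ∧
    ∑ i, ((1 - 2 * C (z i).1) * p i) • fairnessWeight ψ φ z (z i).2 =
      -∑ i, C (z i).1 • fairnessWeight ψ φ z (z i).2}

/-- The objective `N⁻¹ Σᵢ pᵢ d(xᵢ)` of the projection linear program, with values in `[0, ∞]`. -/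
def flipCost (cbar : X → X → ℝ≥0∞) (C : X → ℝ) (z : Fin N → X × B) (p : Fin N → ℝ) : ℝ≥0∞ :=
  (N : ℝ≥0∞)⁻¹ * ∑ i, ENNReal.ofReal (p i) * dBoundary cbar C (z i).1

variable [MeasurableSingletonClass X] [MeasurableSingletonClass B] [CompleteSpace V]
  [CompleteSpace E] [NeZero N]

theorem movedEmpirical_mem_fairMeasures {p : Fin N → ℝ} (hp : p ∈ fairFlips C ψ φ z)
    {x' : Fin N → X} (hflip : ∀ i, C (x' i) = 1 - C (z i).1) :
    movedEmpirical p z (fun i => (x' i, (z i).2)) ∈ fairMeasures C ψ φ := by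
  obtain ⟨hp_box, hp_con⟩ := hp
  refine ⟨isProbabilityMeasure_movedEmpirical hp_box _ _, ?_⟩
  have hmean : ∫ w, ψ w.2 ∂movedEmpirical p z (fun i => (x' i, (z i).2)) =
      (N : ℝ)⁻¹ • ∑ j, ψ (z j).2 := by
    simp only [integral_movedEmpirical hp_box, ← add_smul, sub_add_cancel, one_smul]
  have hterm (i : Fin N) (w : E) : (1 - p i) • C (z i).1 • w + p i • C (x' i) • w =
      ((1 - 2 * C (z i).1) * p i) • w + C (z i).1 • w := by
    rw [hflip]
    module
  rw [hmean, integral_movedEmpirical hp_box]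
  simp only [hterm, Finset.sum_add_distrib]
  exact smul_eq_zero_of_right _ (add_eq_zero_iff_eq_neg.2 hp_con)

theorem mem_fairFlips_of_coupling {π : Measure ((X × B) × X × B)} (hC_meas : Measurable C)
    (hC_bin : ∀ x, C x = 0 ∨ C x = 1) (hfair : π.map Prod.fst ∈ fairMeasures C ψ φ)
    (hsnd : π.map Prod.snd = empirical z) (hlabel : ∀ᵐ w ∂π, w.1.2 = w.2.2) {q : Fin N → ℝ}
    (hq : ∀ i, q i ∈ Set.Icc (0 : ℝ) 1)
    (hflip : (π.restrict (flipEvent B C)).map Prod.snd = weightedEmpirical q z) :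
    q ∈ fairFlips C ψ φ z := by
  have hlabels : (π.map Prod.snd).map Prod.snd = empirical (fun i => (z i).2) := by
    rw [hsnd, map_empirical _ measurable_snd]
  have hmean : ∫ w, ψ w.2 ∂π.map Prod.fst = (N : ℝ)⁻¹ • ∑ j, ψ (z j).2 := by
    have hmarginal := (map_snd_map_fst_eq_of_ae_label_eq hlabel).trans hlabels
    rw [← integral_empirical (fun j => (z j).2) ψ, ← hmarginal, integral_map
      measurable_snd.aemeasurable (hmarginal ▸ (integrable_empirical _ ψ).aestronglyMeasurable)]
  have hzero : (N : ℝ)⁻¹ • ∑ i, C (z i).1 • fairnessWeight ψ φ z (z i).2 +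
      (N : ℝ)⁻¹ • ∑ i, q i • (1 - 2 * C (z i).1) • fairnessWeight ψ φ z (z i).2 = 0 := by
    rw [← integral_empirical z fun w => C w.1 • fairnessWeight ψ φ z w.2,
      ← integral_weightedEmpirical (fun i => (hq i).1) z
        fun w => (1 - 2 * C w.1) • fairnessWeight ψ φ z w.2, ← hsnd, ← hflip,
      ← integral_map_fst_eq_add_integral_flipEvent hC_meas hC_bin hlabel
        (hlabels ▸ integrable_empirical _ _)]
    simpa only [fairnessWeight, hmean] using hfair.2
  refine ⟨hq, eq_neg_of_add_eq_zero_right ?_⟩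
  rw [← smul_add, smul_eq_zero_iff_right (inv_ne_zero (NeZero.ne _))] at hzero
  simpa only [smul_smul, mul_comm (q _)] using hzero

end Fairness

section Projection

variable {X 𝒜 V E : Type*} [MeasurableSpace X] [MeasurableSpace 𝒜]
  [MeasurableSingletonClass X] [MeasurableSingletonClass 𝒜]
  [NormedAddCommGroup V] [NormedSpace ℝ V] [CompleteSpace V]
  [NormedAddCommGroup E] [NormedSpace ℝ E] [CompleteSpace E]
  {cbar : X → X → ℝ≥0∞} {C : X → ℝ} {ψ : 𝒜 × Bool → V} {φ : V → V → E}
  {N : ℕ} [NeZero N] {z : Fin N → X × 𝒜 × Bool}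

theorem iInf_flipCost_le_Wcost (hc_symm : ∀ x x', cbar x x' = cbar x' x)
    (hC_bin : ∀ x, C x = 0 ∨ C x = 1) (hC_meas : Measurable C)
    {Q : Measure (X × 𝒜 × Bool)} (hQ : Q ∈ fairMeasures C ψ φ) :
    ⨅ q ∈ fairFlips C ψ φ z, flipCost cbar C z q ≤ Wcost (prodCost cbar) Q (empirical z) := by
  refine le_iInf₂ fun π ⟨hfst, hsnd⟩ => ?_
  subst hfst
  by_cases hcost : ∫⁻ w, prodCost cbar w.1 w.2 ∂π = ⊤
  · exact hcost ▸ le_top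
  have hlabel : ∀ᵐ w ∂π, w.1.2 = w.2.2 :=
    ae_label_eq_of_lintegral_ne_top hsnd (fun _ _ => prodCost_of_label_ne) hcost
  have hflip_le : (π.restrict (flipEvent (𝒜 × Bool) C)).map Prod.snd ≤ empirical z :=
    hsnd ▸ Measure.map_mono Measure.restrict_le_self measurable_snd
  obtain ⟨q, hq, hflip⟩ := exists_eq_weightedEmpirical_of_le hflip_le
  calc ⨅ q ∈ fairFlips C ψ φ z, flipCost cbar C z q
      ≤ flipCost cbar C z q :=
        iInf₂_le q (mem_fairFlips_of_coupling hC_meas hC_bin hQ hsnd hlabel hq hflip)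
    _ = ∫⁻ w, dBoundary cbar C w.1 ∂(π.restrict (flipEvent (𝒜 × Bool) C)).map Prod.snd := by
        rw [hflip, lintegral_weightedEmpirical, flipCost]
    _ ≤ ∫⁻ w, prodCost cbar w.1 w.2 ∂π :=
        lintegral_map_restrict_flipEvent_le hC_meas fun _ _ => dBoundary_le_prodCost hc_symm hC_bin

theorem Wcost_movedEmpirical_le_flipCost_add (hc_symm : ∀ x x', cbar x x' = cbar x' x)
    (hc_self : ∀ x, cbar x x = 0) {p : Fin N → ℝ} (hp : ∀ i, p i ∈ Set.Icc (0 : ℝ) 1)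
    {x' : Fin N → X} {e : ℝ≥0∞}
    (hx' : ∀ i, cbar (z i).1 (x' i) ≤ dBoundary cbar C (z i).1 + e) :
    Wcost (prodCost cbar) (movedEmpirical p z fun i => (x' i, (z i).2)) (empirical z) ≤
      flipCost cbar C z p + e := by
  have hself (w : X × 𝒜 × Bool) : prodCost cbar w w = 0 := by
    rw [prodCost_of_label_eq rfl, hc_self]
  have hmove (i : Fin N) :
      prodCost cbar (x' i, (z i).2) (z i) ≤ dBoundary cbar C (z i).1 + e := by
    rw [prodCost_of_label_eq (cbar := cbar) (w := (x' i, (z i).2)) (w' := z i) rfl, hc_symm]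
    exact hx' i
  calc Wcost (prodCost cbar) (movedEmpirical p z fun i => (x' i, (z i).2)) (empirical z)
      ≤ (N : ℝ≥0∞)⁻¹ * ∑ i, ENNReal.ofReal (p i) * prodCost cbar (x' i, (z i).2) (z i) :=
        Wcost_movedEmpirical_le hself hp _ _
    _ ≤ (N : ℝ≥0∞)⁻¹ * ∑ i, ENNReal.ofReal (p i) * (dBoundary cbar C (z i).1 + e) := by
        gcongr with i
        exact hmove i
    _ ≤ flipCost cbar C z p + e := inv_mul_sum_ofReal_mul_add_le (fun i => (hp i).2) _ e

theorem eps_optimizer_of_projection_general (hc_symm : ∀ x x', cbar x x' = cbar x' x)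
    (hc_self : ∀ x, cbar x x = 0) (hC_bin : ∀ x, C x = 0 ∨ C x = 1) (hC_meas : Measurable C)
    {x' : Fin N → X} (hflip : ∀ i, C (x' i) = 1 - C (z i).1) {e : ℝ≥0∞}
    (hx' : ∀ i, cbar (z i).1 (x' i) ≤ dBoundary cbar C (z i).1 + e)
    {p : Fin N → ℝ} (hp : p ∈ fairFlips C ψ φ z)
    (hp_opt : IsMinOn (flipCost cbar C z) (fairFlips C ψ φ z) p) :
    movedEmpirical p z (fun i => (x' i, (z i).2)) ∈ fairMeasures C ψ φ ∧
      Wcost (prodCost cbar) (movedEmpirical p z fun i => (x' i, (z i).2)) (empirical z) ≤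
        (⨅ Q ∈ fairMeasures C ψ φ, Wcost (prodCost cbar) Q (empirical z)) + e := by
  refine ⟨movedEmpirical_mem_fairMeasures hp hflip,
    (Wcost_movedEmpirical_le_flipCost_add hc_symm hc_self hp.1 hx').trans ?_⟩
  gcongr
  exact le_iInf₂ fun Q hQ => (le_iInf₂ fun q hq => hp_opt hq).trans
    (iInf_flipCost_le_Wcost hc_symm hC_bin hC_meas hQ)

end Projection

/-- **Near-optimal projection measure (Proposition 3).**
Suppose `d(xᵢ) < ∞` for all `i`, let `xᵢ^ε` be an `ε`-optimizer of the
boundary-distance problem at `xᵢ`, and let `p⋆` be an optimal solution of the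
projection linear program.  Then
`Q^ε = (1/N) Σᵢ [(1 − p⋆ᵢ) δ_{(xᵢ,aᵢ,yᵢ)} + p⋆ᵢ δ_{(xᵢ^ε,aᵢ,yᵢ)}]`
belongs to the fair set `ℱ` and satisfies
`W_c(Q^ε, P̂_N) ≤ inf_{Q ∈ ℱ} W_c(Q, P̂_N) + ε`. -/
theorem eps_optimizer_of_projection
    {d s m : ℕ} (𝒳 : Set (Fin d → ℝ)) (𝒜 : Type*)
    [MeasurableSpace 𝒜] [Fintype 𝒜] [MeasurableSingletonClass 𝒜]
    (cbar : ↥𝒳 → ↥𝒳 → ℝ≥0∞)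
    (hc_lsc : LowerSemicontinuous (fun p : ↥𝒳 × ↥𝒳 => cbar p.1 p.2))
    (hc_symm : ∀ x x', cbar x x' = cbar x' x)
    (hc_zero : ∀ x x', cbar x x' = 0 ↔ x = x')
    (C : ↥𝒳 → ℝ) (hC_bin : ∀ x, C x = 0 ∨ C x = 1) (hC_meas : Measurable C)
    (ψ : 𝒜 × Bool → Fin s → ℝ)
    (φ : (Fin s → ℝ) → (Fin s → ℝ) → Fin m → ℝ)
    {N : ℕ} (hN : 0 < N)
    (x : Fin N → ↥𝒳) (a : Fin N → 𝒜) (y : Fin N → Bool)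
    (hd_fin : ∀ i, dBoundary cbar C (x i) ≠ ⊤)
    (ε : ℝ) (hε : 0 < ε)
    (xeps : Fin N → ↥𝒳)
    (hxeps_flip : ∀ i, C (xeps i) = 1 - C (x i))
    (hxeps_opt : ∀ i, cbar (x i) (xeps i) ≤
      dBoundary cbar C (x i) + ENNReal.ofReal ε)
    (pstar : Fin N → ℝ)
    -- `p⋆` is a feasible solution of the projection linear program …
    (hp_box : ∀ i, pstar i ∈ Set.Icc (0:ℝ) 1)
    (hp_con : ∑ i, ((1 - 2 * C (x i)) * pstar i) •
          φ (ψ (a i, y i)) ((N : ℝ)⁻¹ • ∑ j, ψ (a j, y j))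
        = - ∑ i, C (x i) • φ (ψ (a i, y i)) ((N : ℝ)⁻¹ • ∑ j, ψ (a j, y j)))
    -- … and it is optimal:
    (hp_opt : ∀ q : Fin N → ℝ, (∀ i, q i ∈ Set.Icc (0:ℝ) 1) →
      (∑ i, ((1 - 2 * C (x i)) * q i) •
          φ (ψ (a i, y i)) ((N : ℝ)⁻¹ • ∑ j, ψ (a j, y j))
        = - ∑ i, C (x i) • φ (ψ (a i, y i)) ((N : ℝ)⁻¹ • ∑ j, ψ (a j, y j))) →
      ∑ i, ENNReal.ofReal (pstar i) * dBoundary cbar C (x i)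
        ≤ ∑ i, ENNReal.ofReal (q i) * dBoundary cbar C (x i)) :
    ((N : ℝ≥0∞)⁻¹ • ∑ i,
        (ENNReal.ofReal (1 - pstar i) • Measure.dirac ((x i, a i, y i) : ↥𝒳 × 𝒜 × Bool)
          + ENNReal.ofReal (pstar i) • Measure.dirac ((xeps i, a i, y i) : ↥𝒳 × 𝒜 × Bool)))
      ∈ fairSet 𝒳 𝒜 C ψ φ
    ∧
    Wcost (prodCost cbar)
        ((N : ℝ≥0∞)⁻¹ • ∑ i,
          (ENNReal.ofReal (1 - pstar i) • Measure.dirac ((x i, a i, y i) : ↥𝒳 × 𝒜 × Bool)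
            + ENNReal.ofReal (pstar i) • Measure.dirac ((xeps i, a i, y i) : ↥𝒳 × 𝒜 × Bool)))
        (empMeasure x a y)
      ≤ (⨅ Q ∈ fairSet 𝒳 𝒜 C ψ φ, Wcost (prodCost cbar) Q (empMeasure x a y))
        + ENNReal.ofReal ε := by
  have : NeZero N := ⟨hN.ne'⟩
  exact eps_optimizer_of_projection_general (z := fun i => (x i, a i, y i)) hc_symm
    (fun x => (hc_zero x x).2 rfl) hC_bin hC_meas hxeps_flip hxeps_opt ⟨hp_box, hp_con⟩
    fun q hq => mul_le_mul_right (hp_opt q hq.1 hq.2) _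
end
end

section
/- Strong duality for the ε-fairness projection: given φ_i := φ(u_i, E_{P̂_N}[U]) ∈ ℝ^m, labels 𝒞(x_i) ∈ {0,1}, values d(x_i) ∈ [0,∞] and ε ∈ ℝ^m_+, the optimal value of the linear program min_p { (1/N) Σ_i p_i d(x_i) : p ∈ [0,1]^N, Σ_i (1−2𝒞(x_i)) φ_i p_i + Σ_i 𝒞(x_i) φ_i ≤ N ε } (equal to +∞ if infeasible) equals 𝒟_ε(P̂_N) := sup_{γ ∈ ℝ^m_+} { −γᵀε + (1/N) Σ_i [ γᵀφ_i 𝒞(x_i) + ( d(x_i) + (1−2𝒞(x_i)) γᵀφ_i )⁻ ] }, where (t)⁻ = min{t,0} and (∞ + r)⁻ = 0 for any real r. -/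
open BigOperators ENNReal

noncomputable section

/-- `(D + r)⁻ = min{D + r, 0}`, with the convention `(∞ + r)⁻ = 0` for real `r`,
where `D ∈ [0,∞]` and `r ∈ ℝ`. -/
def negPartE (D : ℝ≥0∞) (r : ℝ) : ℝ := if D = ⊤ then 0 else min (D.toReal + r) 0

/-!
On `[0, 1]^N` the cost is finite exactly where `p ≤ u`, with `u i = 0` if `d i = ∞` and `u i = 1`
otherwise, so the program may be restricted to the box `[0, u]`, on which the cost is linear. The
box is compact, so Sion's minimax theorem exchanges `⨅ p` and `⨆ γ` in the Lagrangian without any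
constraint qualification. The supremum over `γ ≥ 0` is the cost on the feasible set and `+∞` off it,
while the infimum over the box splits into one-dimensional minima `min (c i * u i) 0`, where `c i`
is the coefficient of `p i` in the Lagrangian.
-/

section LagrangeDuality

theorem convexOn_sum {𝕜 E β κ : Type*} [Semiring 𝕜] [PartialOrder 𝕜] [AddCommMonoid E] [SMul 𝕜 E]
    [AddCommMonoid β] [PartialOrder β] [IsOrderedAddMonoid β] [Module 𝕜 β] {K : Set E}
    {g : κ → E → β} {s : Finset κ} (hK : Convex 𝕜 K) (hg : ∀ k ∈ s, ConvexOn 𝕜 K (g k)) :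
    ConvexOn 𝕜 K fun x => ∑ k ∈ s, g k x := by
  simpa only [Finset.sum_fn] using
    Finset.sum_induction g (ConvexOn 𝕜 K) (fun _ _ => ConvexOn.add) (convexOn_const 0 hK) hg

/-- The Lagrangian of minimizing `f x` subject to `g k x ≤ 0` for all `k`, at the multiplier `γ`. -/
def lagrangian {E κ : Type*} [Fintype κ] (f : E → ℝ) (g : κ → E → ℝ) (x : E) (γ : κ → ℝ) : ℝ :=
  f x + ∑ k, γ k * g k x

variable {E κ : Type*} [Fintype κ] {K : Set E} {f : E → ℝ} {g : κ → E → ℝ} {γ : κ → ℝ}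

theorem iSup_lagrangian (f : E → ℝ) (g : κ → E → ℝ) (x : E) :
    ⨆ γ ∈ Set.Ici 0, (lagrangian f g x γ : EReal) = ⨅ _ : ∀ k, g k x ≤ 0, (f x : EReal) := by
  classical
  by_cases hfeas : ∀ k, g k x ≤ 0
  · rw [iInf_pos hfeas]
    refine le_antisymm (iSup₂_le fun γ hγ => ?_)
      (le_iSup₂_of_le 0 Set.self_mem_Ici (by simp [lagrangian]))
    exact EReal.coe_le_coe (add_le_of_nonpos_right
      (Finset.sum_nonpos fun k _ => mul_nonpos_of_nonneg_of_nonpos (hγ k) (hfeas k)))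
  · rw [iInf_neg hfeas, EReal.eq_top_iff_forall_lt]
    intro y
    obtain ⟨k, hk⟩ := not_forall.1 hfeas
    obtain ⟨s, hs⟩ := exists_nat_gt ((y - f x) / g k x)
    have hray : y < lagrangian f g x (Pi.single k s) := by
      simpa [lagrangian, Pi.single_apply, sub_lt_iff_lt_add'] using
        (div_lt_iff₀ (not_le.1 hk)).1 hs
    exact (EReal.coe_lt_coe hray).trans_le
      (le_iSup₂_of_le _ (Pi.single_nonneg.2 s.cast_nonneg) le_rfl)

theorem concaveOn_lagrangian {Γ : Set (κ → ℝ)} (hΓ : Convex ℝ Γ) (f : E → ℝ) (g : κ → E → ℝ)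
    (x : E) : ConcaveOn ℝ Γ (lagrangian f g x) :=
  (concaveOn_const (f x) hΓ).add (((dotProductBilin ℝ ℝ).flip fun k => g k x).concaveOn hΓ)

theorem continuous_lagrangian (f : E → ℝ) (g : κ → E → ℝ) (x : E) :
    Continuous (lagrangian f g x) := by
  unfold lagrangian
  fun_prop

theorem lowerSemicontinuousOn_lagrangian [TopologicalSpace E] (hf : LowerSemicontinuousOn f K)
    (hg : ∀ k, LowerSemicontinuousOn (g k) K) (hγ : 0 ≤ γ) :
    LowerSemicontinuousOn (fun x => lagrangian f g x γ) K :=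
  hf.add (lowerSemicontinuousOn_sum fun k _ =>
    (continuous_const_mul (γ k)).comp_lowerSemicontinuousOn (hg k)
      (monotone_mul_left_of_nonneg (hγ k)))

variable [AddCommGroup E] [Module ℝ E]

theorem convexOn_lagrangian (hf : ConvexOn ℝ K f) (hg : ∀ k, ConvexOn ℝ K (g k)) (hγ : 0 ≤ γ) :
    ConvexOn ℝ K fun x => lagrangian f g x γ :=
  hf.add (convexOn_sum hf.1 fun k _ => (hg k).smul (hγ k))

theorem iInf_eq_iSup_iInf_lagrangian [TopologicalSpace E] [IsTopologicalAddGroup E]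
    [ContinuousSMul ℝ E] (hK : IsCompact K)
    (hf : ConvexOn ℝ K f) (hf_lsc : LowerSemicontinuousOn f K)
    (hg : ∀ k, ConvexOn ℝ K (g k)) (hg_lsc : ∀ k, LowerSemicontinuousOn (g k) K) :
    ⨅ x ∈ K ∩ {x | ∀ k, g k x ≤ 0}, (f x : EReal) =
      ⨆ γ ∈ Set.Ici 0, ⨅ x ∈ K, (lagrangian f g x γ : EReal) := by
  have hcoe : Monotone Real.toEReal := EReal.coe_strictMono.monotone
  rcases K.eq_empty_or_nonempty with rfl | hne
  · simpa using (biSup_const (a := (⊤ : EReal)) (Set.nonempty_Ici (a := (0 : κ → ℝ)))).symm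
  calc ⨅ x ∈ K ∩ {x | ∀ k, g k x ≤ 0}, (f x : EReal)
      = ⨅ x ∈ K, ⨆ γ ∈ Set.Ici 0, (lagrangian f g x γ : EReal) := by
        simp only [iSup_lagrangian, Set.mem_inter_iff, Set.mem_ofPred_eq, iInf_and]
    _ = ⨆ γ ∈ Set.Ici 0, ⨅ x ∈ K, (lagrangian f g x γ : EReal) := by
        refine Sion.minimax' hne hf.1 hK (fun γ hγ => ?_) (fun γ hγ => ?_) (convex_Ici 0)
          (fun x _ => ?_) (fun x _ => ?_)
        · exact continuous_coe_real_ereal.comp_lowerSemicontinuousOn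
            (lowerSemicontinuousOn_lagrangian hf_lsc hg_lsc hγ) hcoe
        · exact (convexOn_lagrangian hf hg hγ).quasiconvexOn.monotone_comp (g := Real.toEReal) hcoe
        · exact (continuous_coe_real_ereal.comp (continuous_lagrangian f g x)).upperSemicontinuous
            |>.upperSemicontinuousOn _
        · exact (concaveOn_lagrangian (convex_Ici 0) f g x).quasiconcaveOn.monotone_comp
            (g := Real.toEReal) hcoe

end LagrangeDuality

theorem isLeast_sum_mul_image_Icc {ι R : Type*} [Fintype ι] [Ring R] [LinearOrder R]
    [IsOrderedRing R] (c : ι → R) {u : ι → R} (hu : 0 ≤ u) :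
    IsLeast ((fun x => ∑ i, c i * x i) '' Set.Icc 0 u) (∑ i, min (c i * u i) 0) := by
  refine ⟨⟨fun i => if c i < 0 then u i else 0, ⟨fun i => ?_, fun i => ?_⟩,
    Finset.sum_congr rfl fun i _ => ?_⟩, ?_⟩
  · exact ite_nonneg (hu i) le_rfl
  · dsimp only
    split_ifs
    exacts [le_rfl, hu i]
  · rcases lt_or_ge (c i) 0 with hc | hc
    · simp [hc, mul_nonpos_of_nonpos_of_nonneg hc.le (hu i)]
    · simp [hc.not_gt, mul_nonneg hc (hu i)]
  · rintro _ ⟨x, hx, rfl⟩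
    refine Finset.sum_le_sum fun i _ => ?_
    rcases le_total (c i) 0 with hc | hc
    · exact min_le_of_left_le (mul_le_mul_of_nonpos_left (hx.2 i) hc)
    · exact min_le_of_right_le (mul_nonneg hc (hx.1 i))

theorem coe_ennreal_iInf {α : Sort*} (f : α → ℝ≥0∞) :
    ((⨅ x, f x : ℝ≥0∞) : EReal) = ⨅ x, (f x : EReal) :=
  EReal.coe_ennreal_strictMono.monotone.map_iInf_of_continuousAt
    continuous_coe_ennreal_ereal.continuousAt EReal.coe_ennreal_top

/-- The largest fraction `p ∈ [0, 1]` for which the cost `p * D` is finite. -/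
def finiteCostCap (D : ℝ≥0∞) : ℝ := if D = ⊤ then 0 else 1

theorem finiteCostCap_nonneg (D : ℝ≥0∞) : 0 ≤ finiteCostCap D :=
  ite_nonneg le_rfl zero_le_one

theorem le_finiteCostCap_iff {D : ℝ≥0∞} {p : ℝ} :
    p ≤ finiteCostCap D ↔ p ≤ 1 ∧ (D = ⊤ → p ≤ 0) := by
  unfold finiteCostCap
  split_ifs with hD
  · simpa [hD] using fun hp : p ≤ 0 => hp.trans zero_le_one
  · simp [hD]

theorem negPartE_eq_min (D : ℝ≥0∞) (r : ℝ) :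
    negPartE D r = min ((D.toReal + r) * finiteCostCap D) 0 := by
  unfold negPartE finiteCostCap
  split_ifs <;> simp

theorem negPartE_const_mul {c : ℝ≥0∞} (hc : c ≠ 0) (hc' : c ≠ ⊤) (D : ℝ≥0∞) (r : ℝ) :
    negPartE (c * D) (c.toReal * r) = c.toReal * negPartE D r := by
  have hD : c * D = ⊤ ↔ D = ⊤ := by simp [ENNReal.mul_eq_top, hc, hc']
  simp only [negPartE, hD, mul_ite, mul_zero, ENNReal.toReal_mul, ← mul_add]
  rw [mul_min_of_nonneg _ _ ENNReal.toReal_nonneg, mul_zero]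

section BoxProgram

variable {ι κ : Type*} [Fintype ι] [Fintype κ]

theorem sum_ofReal_mul_eq_coe {p : ι → ℝ} {d : ι → ℝ≥0∞} (hp : 0 ≤ p)
    (hd : ∀ i, d i = ⊤ → p i ≤ 0) :
    ((∑ i, ENNReal.ofReal (p i) * d i : ℝ≥0∞) : EReal) = (∑ i, (d i).toReal * p i : ℝ) := by
  have hterm (i : ι) : ENNReal.ofReal (p i) * d i = ENNReal.ofReal ((d i).toReal * p i) := by
    by_cases hi : d i = ⊤
    · simp [hi, hd i hi]
    · rw [ENNReal.ofReal_mul ENNReal.toReal_nonneg, ENNReal.ofReal_toReal hi, mul_comm]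
  have hnonneg (i : ι) : 0 ≤ (d i).toReal * p i := mul_nonneg ENNReal.toReal_nonneg (hp i)
  simp only [hterm]
  rw [← ENNReal.ofReal_sum_of_nonneg fun i _ => hnonneg i, EReal.coe_ennreal_ofReal,
    max_eq_left (Finset.sum_nonneg fun i _ => hnonneg i)]

theorem sum_ofReal_mul_eq_top {p : ι → ℝ} {d : ι → ℝ≥0∞} {i : ι} (hd : d i = ⊤) (hp : 0 < p i) :
    ∑ i, ENNReal.ofReal (p i) * d i = ⊤ :=
  ENNReal.sum_eq_top.2 ⟨i, Finset.mem_univ i, by simp [hd, ENNReal.mul_top, hp]⟩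

theorem iInf_cost_eq_iInf_finiteCost (d : ι → ℝ≥0∞) (S : Set (ι → ℝ)) :
    ⨅ p ∈ Set.Icc 0 1 ∩ S, ((∑ i, ENNReal.ofReal (p i) * d i : ℝ≥0∞) : EReal) =
      ⨅ p ∈ Set.Icc 0 (finiteCostCap ∘ d) ∩ S, ((∑ i, (d i).toReal * p i : ℝ) : EReal) := by
  have hcap {p : ι → ℝ} : p ≤ finiteCostCap ∘ d ↔ p ≤ 1 ∧ ∀ i, d i = ⊤ → p i ≤ 0 := by
    simp only [Pi.le_def, Function.comp_apply, le_finiteCostCap_iff, forall_and, Pi.one_apply]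
  refine le_antisymm (le_iInf₂ fun p ⟨⟨hp₀, hp⟩, hpS⟩ => ?_)
    (le_iInf₂ fun p ⟨⟨hp₀, hp₁⟩, hpS⟩ => ?_)
  · obtain ⟨hp₁, hd⟩ := hcap.1 hp
    exact iInf₂_le_of_le p ⟨⟨hp₀, hp₁⟩, hpS⟩ (sum_ofReal_mul_eq_coe hp₀ hd).le
  · by_cases hd : ∀ i, d i = ⊤ → p i ≤ 0
    · exact iInf₂_le_of_le p ⟨⟨hp₀, hcap.2 ⟨hp₁, hd⟩⟩, hpS⟩ (sum_ofReal_mul_eq_coe hp₀ hd).ge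
    · push Not at hd
      obtain ⟨i, hi, hpi⟩ := hd
      simp [sum_ofReal_mul_eq_top hi hpi]

theorem iInf_lagrangian_eq_sum_negPartE (d : ι → ℝ≥0∞) (A : κ → ι → ℝ) (b γ : κ → ℝ) :
    ⨅ p ∈ Set.Icc 0 (finiteCostCap ∘ d),
        (lagrangian (fun p => ∑ i, (d i).toReal * p i) (fun k p => ∑ i, A k i * p i - b k) p γ :
          EReal) =
      ((-∑ k, γ k * b k + ∑ i, negPartE (d i) (∑ k, γ k * A k i) : ℝ) : EReal) := by
  have hseparable (p : ι → ℝ) :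
      lagrangian (fun p => ∑ i, (d i).toReal * p i) (fun k p => ∑ i, A k i * p i - b k) p γ =
        -∑ k, γ k * b k + ∑ i, ((d i).toReal + ∑ k, γ k * A k i) * p i := by
    simp only [lagrangian, mul_sub, add_mul, Finset.sum_sub_distrib, Finset.sum_add_distrib,
      Finset.mul_sum, Finset.sum_mul, mul_assoc]
    rw [Finset.sum_comm]
    ring
  obtain ⟨⟨p, hp, hmin⟩, hle⟩ := isLeast_sum_mul_image_Icc
    (fun i => (d i).toReal + ∑ k, γ k * A k i) fun i => finiteCostCap_nonneg (d i)
  simp only [hseparable, negPartE_eq_min]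
  refine le_antisymm (iInf₂_le_of_le p hp ?_) (le_iInf₂ fun q hq => ?_)
  · exact EReal.coe_le_coe (add_le_add_right hmin.le _)
  · exact EReal.coe_le_coe (add_le_add_right (hle ⟨q, hq, rfl⟩) _)

theorem iInf_box_cost_eq_iSup_sum_negPartE (d : ι → ℝ≥0∞) (A : κ → ι → ℝ) (b : κ → ℝ) :
    ((⨅ p ∈ Set.Icc 0 1 ∩ {p : ι → ℝ | ∀ k, ∑ i, A k i * p i ≤ b k},
        ∑ i, ENNReal.ofReal (p i) * d i : ℝ≥0∞) : EReal) =
      ⨆ γ ∈ Set.Ici (0 : κ → ℝ),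
        ((-∑ k, γ k * b k + ∑ i, negPartE (d i) (∑ k, γ k * A k i) : ℝ) : EReal) := by
  have hbox : Convex ℝ (Set.Icc 0 (finiteCostCap ∘ d)) := convex_Icc _ _
  have hconvex (a : ι → ℝ) : ConvexOn ℝ (Set.Icc 0 (finiteCostCap ∘ d)) fun p => ∑ i, a i * p i :=
    (dotProductBilin ℝ ℝ a).convexOn hbox
  have hlsc (a : ι → ℝ) (s : ℝ) : LowerSemicontinuous fun p : ι → ℝ => ∑ i, a i * p i - s :=
    (by fun_prop : Continuous _).lowerSemicontinuous
  simp only [coe_ennreal_iInf, iInf_cost_eq_iInf_finiteCost, ← iInf_lagrangian_eq_sum_negPartE,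
    ← sub_nonpos (b := b _)]
  exact iInf_eq_iSup_iInf_lagrangian isCompact_Icc (hconvex _)
    (by simpa using (hlsc (fun i => (d i).toReal) 0).lowerSemicontinuousOn _)
    (fun k => (hconvex (A k)).sub (concaveOn_const (b k) hbox))
    fun k => (hlsc (A k) (b k)).lowerSemicontinuousOn _

end BoxProgram

section FairnessProgram

variable {ι κ : Type*} [Fintype ι] [Fintype κ]

theorem sum_add_sum_le_mul_iff {c : ℝ} (hc : 0 < c) (a x s : ι → ℝ) (e : ℝ) :
    ∑ i, a i * x i + ∑ i, s i ≤ c * e ↔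
      ∑ i, c⁻¹ * a i * x i ≤ e - c⁻¹ * ∑ i, s i := by
  simp only [mul_assoc, ← Finset.mul_sum]
  rw [le_sub_iff_add_le, ← mul_add, inv_mul_le_iff₀ hc]

theorem neg_sum_add_sum_negPartE_const_mul {c : ℝ≥0∞} (hc : c ≠ 0) (hc' : c ≠ ⊤)
    (φ : ι → κ → ℝ) (s t : ι → ℝ) (d : ι → ℝ≥0∞) (ε γ : κ → ℝ) :
    -∑ k, γ k * (ε k - c.toReal * ∑ i, s i * φ i k) +
        ∑ i, negPartE (c * d i) (∑ k, γ k * (c.toReal * (t i * φ i k))) =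
      -∑ k, γ k * ε k + c.toReal * ∑ i, ((∑ k, γ k * φ i k) * s i +
        negPartE (d i) (t i * ∑ k, γ k * φ i k)) := by
  have hscale (i : ι) : ∑ k, γ k * (c.toReal * (t i * φ i k)) =
      c.toReal * (t i * ∑ k, γ k * φ i k) := by
    simp only [Finset.mul_sum]
    exact Finset.sum_congr rfl fun k _ => by ring
  have hswap : ∑ k, γ k * (c.toReal * ∑ i, s i * φ i k) =
      c.toReal * ∑ i, (∑ k, γ k * φ i k) * s i := by
    simp only [Finset.mul_sum, Finset.sum_mul]
    rw [Finset.sum_comm]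
    exact Finset.sum_congr rfl fun i _ => Finset.sum_congr rfl fun k _ => by ring
  simp only [hscale, negPartE_const_mul hc hc', mul_sub, Finset.sum_sub_distrib, hswap,
    Finset.sum_add_distrib, ← Finset.mul_sum]
  ring

theorem eps_fairness_projection_strong_duality_general [Nonempty ι]
    (φ : ι → κ → ℝ) (C : ι → ℝ) (d : ι → ℝ≥0∞) (ε : κ → ℝ) :
    ((⨅ p ∈ {p : ι → ℝ |
        (∀ i, p i ∈ Set.Icc (0 : ℝ) 1) ∧
        ∀ k, (∑ i, (1 - 2 * C i) * φ i k * p i) + ∑ i, C i * φ i k ≤ Fintype.card ι * ε k},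
        (Fintype.card ι : ℝ≥0∞)⁻¹ * ∑ i, ENNReal.ofReal (p i) * d i : ℝ≥0∞) : EReal) =
      ⨆ γ : {γ : κ → ℝ // ∀ k, 0 ≤ γ k},
        (((-∑ k, γ.1 k * ε k) +
          (Fintype.card ι : ℝ)⁻¹ * ∑ i, ((∑ k, γ.1 k * φ i k) * C i +
            negPartE (d i) ((1 - 2 * C i) * ∑ k, γ.1 k * φ i k)) : ℝ) : EReal) := by
  have hcard : (0 : ℝ) < Fintype.card ι := by exact_mod_cast Fintype.card_pos
  have hprogram := iInf_box_cost_eq_iSup_sum_negPartE (fun i => (Fintype.card ι : ℝ≥0∞)⁻¹ * d i)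
    (fun k i => (Fintype.card ι : ℝ)⁻¹ * ((1 - 2 * C i) * φ i k))
    (fun k => ε k - (Fintype.card ι : ℝ)⁻¹ * ∑ i, C i * φ i k)
  have hdual := neg_sum_add_sum_negPartE_const_mul (c := (Fintype.card ι : ℝ≥0∞)⁻¹) (by simp)
    (by simp) φ C (fun i => 1 - 2 * C i) d ε
  simp only [ENNReal.toReal_inv, ENNReal.toReal_natCast] at hdual
  simp only [hdual, mul_left_comm (ENNReal.ofReal _), ← Finset.mul_sum,
    ← sum_add_sum_le_mul_iff hcard] at hprogram
  simpa only [iSup_subtype, Set.mem_inter_iff, Set.mem_Icc, Set.mem_Ici, Pi.le_def, ← forall_and,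
    Pi.zero_apply, Pi.one_apply, Set.mem_ofPred_eq] using hprogram

end FairnessProgram

/-- **Strong duality for the ε-fairness projection (Proposition 6).**
Given `φᵢ := φ(uᵢ, E_{P̂_N}[U]) ∈ ℝ^m`, binary labels `𝒞(xᵢ) ∈ {0,1}`, values
`d(xᵢ) ∈ [0,∞]` and a tolerance `ε ∈ ℝ^m_+`, the optimal value of
`min_p { (1/N) Σᵢ pᵢ d(xᵢ) : p ∈ [0,1]^N, Σᵢ (1−2𝒞(xᵢ)) φᵢ pᵢ + Σᵢ 𝒞(xᵢ) φᵢ ≤ N ε }`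
(equal to `+∞` if infeasible) equals
`𝒟_ε(P̂_N) = sup_{γ ∈ ℝ^m_+} { −γᵀε + (1/N) Σᵢ [ γᵀφᵢ 𝒞(xᵢ) + (d(xᵢ) + (1−2𝒞(xᵢ)) γᵀφᵢ)⁻ ] }`,
the equality being read in the extended reals. -/
theorem eps_fairness_projection_strong_duality
    {N m : ℕ} (hN : 0 < N)
    (φv : Fin N → Fin m → ℝ)       -- φᵢ = φ(uᵢ, E_{P̂_N}[U])
    (C : Fin N → ℝ) (hC : ∀ i, C i = 0 ∨ C i = 1)   -- 𝒞(xᵢ)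
    (dv : Fin N → ℝ≥0∞)             -- d(xᵢ)
    (ε : Fin m → ℝ) (hε : ∀ k, 0 ≤ ε k) :
    ((⨅ p ∈ {p : Fin N → ℝ |
        (∀ i, p i ∈ Set.Icc (0:ℝ) 1) ∧
        ∀ k, (∑ i, (1 - 2 * C i) * φv i k * p i) + ∑ i, C i * φv i k ≤ N * ε k},
        (N : ℝ≥0∞)⁻¹ * ∑ i, ENNReal.ofReal (p i) * dv i : ℝ≥0∞) : EReal)
    =
    ⨆ γ : {γ : Fin m → ℝ // ∀ k, 0 ≤ γ k},
      (((- ∑ k, γ.1 k * ε k) +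
        (N : ℝ)⁻¹ * ∑ i, ((∑ k, γ.1 k * φv i k) * C i +
          negPartE (dv i) ((1 - 2 * C i) * ∑ k, γ.1 k * φv i k)) : ℝ) : EReal) := by
  have : NeZero N := ⟨hN.ne'⟩
  simpa only [Fintype.card_fin] using eps_fairness_projection_strong_duality_general φv C dv ε
end
end
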